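/- For every n ≥ 1 there exist constants C₁, C₂ > 0 depending only on n such that for all weakly decreasing λ, x ∈ ℝ^{n+1}: C₁·R ≤ I⁽ⁿ⁾(λ;x) ≤ C₂·R, where R = [∏_{1≤i<j≤n+1}(x_i−x_j) · ∏_{1≤i<j≤n}(λ_i−λ_j)] / ∏_{1≤i<j≤n+1}(1+(λ_i−λ_j)(x_i−x_j)). -/

import Mathlib

open Finset MeasureTheory

/-- The iterated integral `I⁽ⁿ⁾(λ;x)` over the box `y_k ∈ [x_{k+1}, x_k]`, `k = 1,…,n`, of
`exp(−∑_k (λ_k−λ_{n+1})(x_k−y_k)) · ∏_{i<j≤n} (y_i−y_j)(λ_i−λ_j)/(1+(y_i−y_j)(λ_i−λ_j))`. -/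
noncomputable def Iint (n : ℕ) (lam x : Fin (n + 1) → ℝ) : ℝ :=
  ∫ y in Set.Icc (fun k : Fin n => x k.succ) (fun k : Fin n => x k.castSucc),
    Real.exp (-∑ k : Fin n, (lam k.castSucc - lam (Fin.last n)) * (x k.castSucc - y k)) *
      ∏ i : Fin n, ∏ j ∈ Finset.Ioi i,
        ((y i - y j) * (lam i.castSucc - lam j.castSucc) /
          (1 + (y i - y j) * (lam i.castSucc - lam j.castSucc)))

/-- The saturating function `t ↦ t / (1 + t)`. -/
noncomputable def saturation (t : ℝ) : ℝ := t / (1 + t)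

lemma saturation_nonneg {t : ℝ} (ht : 0 ≤ t) : 0 ≤ saturation t := by
  unfold saturation; positivity

lemma saturation_le_mul {K s t : ℝ} (hK : 1 ≤ K) (hs : 0 ≤ s) (ht : 0 ≤ t) (h : s ≤ K * t) :
    saturation s ≤ K * saturation t := by
  unfold saturation
  rw [← mul_div_assoc, div_le_div_iff₀ (by positivity) (by positivity)]
  nlinarith [mul_nonneg hs ht, mul_nonneg (mul_nonneg hs ht) (sub_nonneg.2 hK)]

lemma div_mul_saturation_eq {a d p v : ℝ} (ha : 0 ≤ a) (hd : 0 ≤ d) (hp : 0 ≤ p) (hv : 0 ≤ v) :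
    a / (1 + (p + v) * a) * saturation ((a + d / (1 + p * d)) * v) =
      a * v * (a + d + a * p * d) /
        ((1 + (p + v) * a) * (1 + p * d + v * (a + d + a * p * d))) := by
  have h : a + d / (1 + p * d) = (a + d + a * p * d) / (1 + p * d) := by
    field_simp
    ring
  have h' : saturation ((a + d / (1 + p * d)) * v) =
      v * (a + d + a * p * d) / (1 + p * d + v * (a + d + a * p * d)) := by
    rw [h, saturation]
    field_simp
  rw [h', div_mul_div_comm]
  ring

/-- One step of the telescoping comparison of neighbouring gaps. -/
lemma div_mul_saturation_comparison {a d p v : ℝ} (ha : 0 ≤ a) (hd : 0 ≤ d) (hp : 0 ≤ p)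
    (hv : 0 ≤ v) :
    a / (1 + (p + v) * a) * saturation ((a + d / (1 + p * d)) * v) ≤
        (a + d) / (1 + (p + v) * (a + d)) * (2 * saturation (a * v)) ∧
      (a + d) / (1 + (p + v) * (a + d)) * saturation (a * v) ≤
        a / (1 + (p + v) * a) * (2 * saturation ((a + d / (1 + p * d)) * v)) := by
  rw [mul_left_comm _ 2, mul_left_comm _ 2, div_mul_saturation_eq ha hd hp hv, saturation,
    div_mul_div_comm, ← mul_div_assoc, ← mul_div_assoc,
    div_le_div_iff₀ (by positivity) (by positivity),
    div_le_div_iff₀ (by positivity) (by positivity)]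
  set L := (a + d + a * p * d) * (1 + (p + v) * (a + d)) * (1 + a * v) with hL
  set R := (a + d) * (1 + (p + v) * a) * (1 + p * d + v * (a + d + a * p * d)) with hR
  have hLR : L - R = a * d * p - a * d * d * p * v := by rw [hL, hR]; ring
  have hav : 0 ≤ a * v := by positivity
  have hR' : a * d * p ≤ R := by
    calc a * d * p = a * 1 * (p * d) := by ring
      _ ≤ R := by
        rw [hR]
        have : 0 ≤ (p + v) * a := by positivity
        have : 0 ≤ v * (a + d + a * p * d) := by positivity
        gcongr <;> linarith
  have hL' : a * d * d * p * v ≤ L := by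
    calc a * d * d * p * v = a * p * d * (v * d) * 1 := by ring
      _ ≤ L := by
        rw [hL]
        have : 0 ≤ (p + v) * a + p * d := by positivity
        gcongr <;> linarith
  have h1 : 0 ≤ a * d * p := by positivity
  have h2 : 0 ≤ a * d * d * p * v := by positivity
  constructor
  · calc _ = a * v * L := by rw [hL]; ring
      _ ≤ a * v * (2 * R) := by gcongr; linarith
      _ = _ := by rw [hR]; ring
  · calc _ = a * v * R := by rw [hR]; ring
      _ ≤ a * v * (2 * L) := by gcongr; linarith
      _ = _ := by rw [hL]; ring

/-- Telescoping along a chain of indices. -/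
lemma telescope_prod_Ioi {n : ℕ} (g : Fin (n + 1) → ℝ) (F G : Fin n → ℝ) (i : Fin n)
    (hF : ∀ j ∈ Ioi i, 0 ≤ F j) (hG : ∀ j ∈ Ioi i, 0 ≤ G j)
    (h : ∀ j ∈ Ioi i, g j.castSucc * F j ≤ g j.succ * G j) :
    g i.succ * ∏ j ∈ Ioi i, F j ≤ g (Fin.last n) * ∏ j ∈ Ioi i, G j := by
  obtain _ | n := n
  · exact i.elim0
  induction i using Fin.reverseInduction with
  | last => simp [← Fin.top_eq_last]
  | cast i ih =>
    have hI : Ioi i.castSucc = insert i.succ (Ioi i.succ) := by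
      ext j
      simp only [mem_Ioi, mem_insert, Fin.lt_def, Fin.ext_iff, Fin.val_castSucc, Fin.val_succ]
      omega
    rw [hI] at hF hG h ⊢
    simp only [forall_mem_insert] at hF hG h
    rw [prod_insert (by simp), prod_insert (by simp)]
    have hi := ih hF.2 hG.2 h.2
    calc g i.castSucc.succ * (F i.succ * ∏ j ∈ Ioi i.succ, F j)
        = g i.succ.castSucc * F i.succ * ∏ j ∈ Ioi i.succ, F j := by
          rw [Fin.succ_castSucc]; ring
      _ ≤ g i.succ.succ * G i.succ * ∏ j ∈ Ioi i.succ, F j :=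
          mul_le_mul_of_nonneg_right h.1 (prod_nonneg hF.2)
      _ = G i.succ * (g i.succ.succ * ∏ j ∈ Ioi i.succ, F j) := by ring
      _ ≤ G i.succ * (g (Fin.last _) * ∏ j ∈ Ioi i.succ, G j) :=
          mul_le_mul_of_nonneg_left hi hG.1
      _ = _ := by ring

lemma prod_Ioi_castSucc {n : ℕ} (f : Fin (n + 1) → ℝ) (i : Fin n) :
    ∏ j ∈ Ioi i.castSucc, f j = (∏ j ∈ Ioi i, f j.castSucc) * f (Fin.last n) := by
  have h1 : Ioi i.castSucc = univ.filter (fun j => i.castSucc < j) := by ext; simp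
  have h2 : Ioi i = univ.filter (fun j => i < j) := by ext; simp
  rw [h1, h2, prod_filter, prod_filter, Fin.prod_univ_castSucc]
  simp [Fin.castSucc_lt_last]

lemma prod_prod_Ioi_castSucc {n : ℕ} (f : Fin (n + 1) → Fin (n + 1) → ℝ) :
    ∏ i, ∏ j ∈ Ioi i, f i j =
      ∏ i : Fin n, ((∏ j ∈ Ioi i, f i.castSucc j.castSucc) * f i.castSucc (Fin.last n)) := by
  rw [Fin.prod_univ_castSucc]
  simp [prod_Ioi_castSucc, ← Fin.top_eq_last]

/-- The effective range of the variable `y k`: the minimum of the gap `x k - x (k + 1)` and of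
`1 / (lam k - lam n)`, up to a factor `2`. -/
noncomputable def effGap {n : ℕ} (lam x : Fin (n + 1) → ℝ) (k : Fin n) : ℝ :=
  (x k.castSucc - x k.succ) /
    (1 + (lam k.castSucc - lam (Fin.last n)) * (x k.castSucc - x k.succ))

/-- The heuristic value of `Iint`, obtained by evaluating the integrand at
`y k = x k - effGap lam x k`. -/
noncomputable def effProd {n : ℕ} (lam x : Fin (n + 1) → ℝ) : ℝ :=
  ∏ i : Fin n, (effGap lam x i * ∏ j ∈ Ioi i, saturation
    ((x i.castSucc - x j.castSucc + effGap lam x j) * (lam i.castSucc - lam j.castSucc)))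

/-- The closed form in the estimate, as a product over rows. -/
lemma closed_form_eq {n : ℕ} (lam x : Fin (n + 1) → ℝ) :
    (∏ i : Fin (n + 1), ∏ j ∈ Ioi i, (x i - x j)) *
        (∏ i : Fin n, ∏ j ∈ Ioi i, (lam i.castSucc - lam j.castSucc)) /
        ∏ i : Fin (n + 1), ∏ j ∈ Ioi i, (1 + (lam i - lam j) * (x i - x j)) =
      ∏ i : Fin n, ((x i.castSucc - x (Fin.last n)) /
        (1 + (lam i.castSucc - lam (Fin.last n)) * (x i.castSucc - x (Fin.last n))) *
        ∏ j ∈ Ioi i, saturation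
          ((x i.castSucc - x j.castSucc) * (lam i.castSucc - lam j.castSucc))) := by
  rw [prod_prod_Ioi_castSucc,
    prod_prod_Ioi_castSucc (fun i j => 1 + (lam i - lam j) * (x i - x j)),
    ← prod_mul_distrib, ← prod_div_distrib]
  refine prod_congr rfl fun i _ => ?_
  simp only [saturation, prod_div_distrib, prod_mul_distrib]
  rw [div_mul_div_comm]
  congr 1
  · ring
  · rw [mul_comm]
    congr 1
    exact prod_congr rfl fun j _ => by ring

section Antitone

variable {n : ℕ} {lam x : Fin (n + 1) → ℝ}

lemma effGap_nonneg (hl : Antitone lam) (hx : Antitone x) (k : Fin n) : 0 ≤ effGap lam x k := by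
  have h1 := sub_nonneg.2 (hx k.castSucc_lt_succ.le)
  have h2 := sub_nonneg.2 (hl (Fin.le_last k.castSucc))
  unfold effGap
  positivity

lemma sub_castSucc_nonneg {i j : Fin n} (hx : Antitone x) (hij : j ∈ Ioi i) :
    0 ≤ x i.castSucc - x j.castSucc :=
  sub_nonneg.2 (hx (Fin.castSucc_le_castSucc_iff.2 (mem_Ioi.1 hij).le))

lemma effProd_comparison (hl : Antitone lam) (hx : Antitone x) (i : Fin n) :
    effGap lam x i * ∏ j ∈ Ioi i, saturation
        ((x i.castSucc - x j.castSucc + effGap lam x j) * (lam i.castSucc - lam j.castSucc)) ≤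
      (x i.castSucc - x (Fin.last n)) /
        (1 + (lam i.castSucc - lam (Fin.last n)) * (x i.castSucc - x (Fin.last n))) *
        ∏ j ∈ Ioi i, (2 * saturation
          ((x i.castSucc - x j.castSucc) * (lam i.castSucc - lam j.castSucc))) ∧
    (x i.castSucc - x (Fin.last n)) /
        (1 + (lam i.castSucc - lam (Fin.last n)) * (x i.castSucc - x (Fin.last n))) *
        ∏ j ∈ Ioi i, saturation
          ((x i.castSucc - x j.castSucc) * (lam i.castSucc - lam j.castSucc)) ≤
      effGap lam x i * ∏ j ∈ Ioi i, (2 * saturation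
        ((x i.castSucc - x j.castSucc + effGap lam x j) * (lam i.castSucc - lam j.castSucc))) := by
  set F : Fin n → ℝ := fun j => saturation
    ((x i.castSucc - x j.castSucc + effGap lam x j) * (lam i.castSucc - lam j.castSucc)) with hFdef
  set G : Fin n → ℝ := fun j => saturation
    ((x i.castSucc - x j.castSucc) * (lam i.castSucc - lam j.castSucc)) with hGdef
  set g : Fin (n + 1) → ℝ := fun k => (x i.castSucc - x k) /
    (1 + (lam i.castSucc - lam (Fin.last n)) * (x i.castSucc - x k)) with hg
  have hF : ∀ j ∈ Ioi i, 0 ≤ F j := fun j hj => saturation_nonneg (mul_nonneg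
    (add_nonneg (sub_castSucc_nonneg hx hj) (effGap_nonneg hl hx j)) (sub_castSucc_nonneg hl hj))
  have hG : ∀ j ∈ Ioi i, 0 ≤ G j := fun j hj => saturation_nonneg (mul_nonneg
    (sub_castSucc_nonneg hx hj) (sub_castSucc_nonneg hl hj))
  have key : ∀ j ∈ Ioi i, g j.castSucc * F j ≤ g j.succ * (2 * G j) ∧
      g j.succ * G j ≤ g j.castSucc * (2 * F j) := by
    intro j hj
    have := div_mul_saturation_comparison (sub_castSucc_nonneg hx hj)
      (sub_nonneg.2 (hx j.castSucc_lt_succ.le)) (sub_nonneg.2 (hl (Fin.le_last j.castSucc)))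
      (sub_castSucc_nonneg hl hj)
    simpa only [hg, hFdef, hGdef, effGap, sub_add_sub_cancel, sub_add_sub_cancel'] using this
  refine ⟨telescope_prod_Ioi g F (fun j => 2 * G j) i hF
    (fun j hj => mul_nonneg zero_le_two (hG j hj)) fun j hj => (key j hj).1, ?_⟩
  have := telescope_prod_Ioi (fun k => -g k) (fun j => 2 * F j) G i
    (fun j hj => mul_nonneg zero_le_two (hF j hj)) hG fun j hj => by
      simpa only [neg_mul, neg_le_neg_iff] using (key j hj).2
  simp only [neg_mul, neg_le_neg_iff] at this
  exact this

lemma prod_Ioi_two_mul_le (i : Fin n) {f : Fin n → ℝ} (hf : ∀ j ∈ Ioi i, 0 ≤ f j) :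
    ∏ j ∈ Ioi i, (2 * f j) ≤ 2 ^ n * ∏ j ∈ Ioi i, f j := by
  rw [prod_mul_distrib, prod_const]
  gcongr
  · exact prod_nonneg hf
  · norm_num
  · simpa using card_le_univ (Ioi i)

lemma effProd_le_closed_form (hl : Antitone lam) (hx : Antitone x) :
    effProd lam x ≤ (2 ^ n) ^ n * ∏ i : Fin n, ((x i.castSucc - x (Fin.last n)) /
        (1 + (lam i.castSucc - lam (Fin.last n)) * (x i.castSucc - x (Fin.last n))) *
        ∏ j ∈ Ioi i, saturation
          ((x i.castSucc - x j.castSucc) * (lam i.castSucc - lam j.castSucc))) := by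
  have hconst : ((2 : ℝ) ^ n) ^ n = ∏ _i : Fin n, (2 : ℝ) ^ n := by simp
  rw [hconst, ← prod_mul_distrib, effProd]
  refine prod_le_prod (fun i _ => mul_nonneg (effGap_nonneg hl hx i)
    (prod_nonneg fun j hj => saturation_nonneg (mul_nonneg (add_nonneg
      (sub_castSucc_nonneg hx hj) (effGap_nonneg hl hx j)) (sub_castSucc_nonneg hl hj))))
    fun i _ => (effProd_comparison hl hx i).1.trans ?_
  have h1 := sub_nonneg.2 (hx (Fin.le_last i.castSucc))
  have h2 := sub_nonneg.2 (hl (Fin.le_last i.castSucc))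
  rw [mul_left_comm]
  exact mul_le_mul_of_nonneg_left (prod_Ioi_two_mul_le i fun j hj => saturation_nonneg
    (mul_nonneg (sub_castSucc_nonneg hx hj) (sub_castSucc_nonneg hl hj))) (by positivity)

lemma closed_form_le_effProd (hl : Antitone lam) (hx : Antitone x) :
    ∏ i : Fin n, ((x i.castSucc - x (Fin.last n)) /
        (1 + (lam i.castSucc - lam (Fin.last n)) * (x i.castSucc - x (Fin.last n))) *
        ∏ j ∈ Ioi i, saturation
          ((x i.castSucc - x j.castSucc) * (lam i.castSucc - lam j.castSucc))) ≤
      (2 ^ n) ^ n * effProd lam x := by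
  have hconst : ((2 : ℝ) ^ n) ^ n = ∏ _i : Fin n, (2 : ℝ) ^ n := by simp
  rw [hconst, effProd, ← prod_mul_distrib]
  refine prod_le_prod (fun i _ => ?_) fun i _ => (effProd_comparison hl hx i).2.trans ?_
  · have h1 := sub_nonneg.2 (hx (Fin.le_last i.castSucc))
    have h2 := sub_nonneg.2 (hl (Fin.le_last i.castSucc))
    exact mul_nonneg (by positivity) (prod_nonneg fun j hj => saturation_nonneg
      (mul_nonneg (sub_castSucc_nonneg hx hj) (sub_castSucc_nonneg hl hj)))
  · rw [mul_left_comm]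
    exact mul_le_mul_of_nonneg_left (prod_Ioi_two_mul_le i fun j hj => saturation_nonneg
      (mul_nonneg (add_nonneg (sub_castSucc_nonneg hx hj) (effGap_nonneg hl hx j))
        (sub_castSucc_nonneg hl hj))) (effGap_nonneg hl hx i)

/-- The integrand of `Iint`. -/
noncomputable def Iintegrand (lam x : Fin (n + 1) → ℝ) (y : Fin n → ℝ) : ℝ :=
  Real.exp (-∑ k : Fin n, (lam k.castSucc - lam (Fin.last n)) * (x k.castSucc - y k)) *
    ∏ i : Fin n, ∏ j ∈ Ioi i, saturation ((y i - y j) * (lam i.castSucc - lam j.castSucc))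

lemma Iint_eq (lam x : Fin (n + 1) → ℝ) :
    Iint n lam x =
      ∫ y in Set.Icc (fun k : Fin n => x k.succ) (fun k : Fin n => x k.castSucc),
        Iintegrand lam x y := rfl

lemma sub_nonneg_of_mem_box (hx : Antitone x) {y : Fin n → ℝ}
    (hy : y ∈ Set.Icc (fun k : Fin n => x k.succ) (fun k : Fin n => x k.castSucc))
    {i j : Fin n} (hij : j ∈ Ioi i) : 0 ≤ y i - y j := by
  have h1 := hy.1 i
  have h2 := hy.2 j
  have h3 : x j.castSucc ≤ x i.succ := hx (Fin.succ_le_castSucc_iff.2 (mem_Ioi.1 hij))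
  dsimp only at h1 h2
  linarith

lemma Iintegrand_nonneg (hl : Antitone lam) (hx : Antitone x) {y : Fin n → ℝ}
    (hy : y ∈ Set.Icc (fun k : Fin n => x k.succ) (fun k : Fin n => x k.castSucc)) :
    0 ≤ Iintegrand lam x y :=
  mul_nonneg (Real.exp_nonneg _) (prod_nonneg fun _ _ => prod_nonneg fun _ hj => saturation_nonneg
    (mul_nonneg (sub_nonneg_of_mem_box hx hy hj) (sub_castSucc_nonneg hl hj)))

lemma integrableOn_Iintegrand (hl : Antitone lam) (hx : Antitone x) :
    IntegrableOn (Iintegrand lam x)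
      (Set.Icc (fun k : Fin n => x k.succ) (fun k : Fin n => x k.castSucc)) := by
  refine ContinuousOn.integrableOn_compact isCompact_Icc ?_
  refine ContinuousOn.mul (by fun_prop) ?_
  refine continuousOn_finsetProd _ fun i _ => continuousOn_finsetProd _ fun j hj => ?_
  refine ContinuousOn.div (by fun_prop) (by fun_prop) fun y hy => ?_
  have := mul_nonneg (sub_nonneg_of_mem_box hx hy hj) (sub_castSucc_nonneg hl hj)
  positivity

lemma effGap_le (hl : Antitone lam) (hx : Antitone x) (k : Fin n) :
    effGap lam x k ≤ x k.castSucc - x k.succ := by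
  have h1 := sub_nonneg.2 (hx k.castSucc_lt_succ.le)
  have h2 := sub_nonneg.2 (hl (Fin.le_last k.castSucc))
  exact div_le_self h1 (le_add_of_nonneg_right (by positivity))

lemma mul_effGap_le_one (hl : Antitone lam) (hx : Antitone x) (k : Fin n) :
    (lam k.castSucc - lam (Fin.last n)) * effGap lam x k ≤ 1 := by
  have h1 := sub_nonneg.2 (hx k.castSucc_lt_succ.le)
  have h2 := sub_nonneg.2 (hl (Fin.le_last k.castSucc))
  rw [effGap, ← mul_div_assoc, div_le_one (by positivity)]
  linarith

lemma effProd_le_Iint (hl : Antitone lam) (hx : Antitone x) :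
    (Real.exp (-n) * ((1 / 4) ^ n) ^ n * (1 / 4) ^ n) * effProd lam x ≤ Iint n lam x := by
  set S := Set.Icc (fun k : Fin n => x k.castSucc - effGap lam x k / 2)
    (fun k : Fin n => x k.castSucc - effGap lam x k / 4)
  set B := Set.Icc (fun k : Fin n => x k.succ) (fun k : Fin n => x k.castSucc) with hB
  have hm := effGap_nonneg hl hx
  have hSB : S ⊆ B := by
    refine Set.Icc_subset_Icc (fun k => ?_) fun k => ?_
    · have := effGap_le hl hx k
      dsimp only
      linarith [hm k]
    · dsimp only
      linarith [hm k]
  have hvol : volume.real S = (1 / 4) ^ n * ∏ k, effGap lam x k := by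
    have hconst : ((1 / 4 : ℝ)) ^ n = ∏ _k : Fin n, (1 / 4 : ℝ) := by simp
    rw [hconst, ← prod_mul_distrib, measureReal_def,
      Real.volume_Icc_pi_toReal fun k => by dsimp only; linarith [hm k]]
    exact prod_congr rfl fun k _ => by ring
  set Q := ∏ i : Fin n, ∏ j ∈ Ioi i, saturation
    ((x i.castSucc - x j.castSucc + effGap lam x j) * (lam i.castSucc - lam j.castSucc)) with hQ
  have hle : ∀ y ∈ S, Real.exp (-n) * (((1 / 4) ^ n) ^ n * Q) ≤ Iintegrand lam x y := by
    intro y hy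
    have hsum : ∑ k : Fin n, (lam k.castSucc - lam (Fin.last n)) * (x k.castSucc - y k) ≤ n := by
      calc _ ≤ ∑ _k : Fin n, (1 : ℝ) := by
            refine sum_le_sum fun k _ => le_trans ?_ (mul_effGap_le_one hl hx k)
            refine mul_le_mul_of_nonneg_left ?_ (sub_nonneg.2 (hl (Fin.le_last k.castSucc)))
            have := hy.1 k
            dsimp only at this
            linarith [hm k]
        _ = n := by simp
    have hcoef : ((1 / 4 : ℝ) ^ n) ^ n ≤ ∏ i : Fin n, ∏ _j ∈ Ioi i, (1 / 4 : ℝ) := by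
      calc ((1 / 4 : ℝ) ^ n) ^ n = ∏ _i : Fin n, (1 / 4 : ℝ) ^ n := by simp
        _ ≤ _ := prod_le_prod (fun _ _ => by positivity) fun i _ => by
          rw [prod_const]
          exact pow_le_pow_of_le_one (by norm_num) (by norm_num)
            (by simpa using card_le_univ (Ioi i))
    have hQ0 : 0 ≤ Q := prod_nonneg fun i _ => prod_nonneg fun j hj => saturation_nonneg
      (mul_nonneg (add_nonneg (sub_castSucc_nonneg hx hj) (hm j)) (sub_castSucc_nonneg hl hj))
    refine mul_le_mul (Real.exp_le_exp.2 (neg_le_neg hsum)) ?_ (by positivity)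
      (Real.exp_nonneg _)
    refine (mul_le_mul_of_nonneg_right hcoef hQ0).trans ?_
    rw [hQ, ← prod_mul_distrib]
    simp only [← prod_mul_distrib]
    have hterm : ∀ i : Fin n, ∀ j ∈ Ioi i, 0 ≤ 1 / 4 * saturation
        ((x i.castSucc - x j.castSucc + effGap lam x j) *
          (lam i.castSucc - lam j.castSucc)) := fun i j hj =>
      mul_nonneg (by norm_num) (saturation_nonneg
        (mul_nonneg (add_nonneg (sub_castSucc_nonneg hx hj) (hm j)) (sub_castSucc_nonneg hl hj)))
    refine prod_le_prod (fun i _ => prod_nonneg (hterm i)) fun i _ =>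
      prod_le_prod (hterm i) fun j hj => ?_
    have hν := sub_castSucc_nonneg hl hj
    have hxij := sub_castSucc_nonneg hx hj
    have hij : x j.castSucc ≤ x i.succ := hx (Fin.succ_le_castSucc_iff.2 (mem_Ioi.1 hj))
    have hyi := hy.1 i
    have hyj := hy.2 j
    have hmi := effGap_le hl hx i
    dsimp only at hyi hyj
    have hscale : x i.castSucc - x j.castSucc + effGap lam x j ≤ 4 * (y i - y j) := by linarith
    have := saturation_le_mul (K := 4) (by norm_num)
      (mul_nonneg (add_nonneg hxij (hm j)) hν)
      (mul_nonneg (sub_nonneg_of_mem_box hx (hSB hy) hj) hν)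
      ((mul_le_mul_of_nonneg_right hscale hν).trans_eq (mul_assoc _ _ _))
    linarith
  have hint := integrableOn_Iintegrand hl hx
  calc _ = Real.exp (-n) * (((1 / 4) ^ n) ^ n * Q) * volume.real S := by
        rw [hvol, effProd, prod_mul_distrib]; ring
    _ ≤ ∫ y in S, Iintegrand lam x y :=
        setIntegral_ge_of_const_le_real measurableSet_Icc isCompact_Icc.measure_ne_top hle
          (hint.mono_set hSB)
    _ ≤ ∫ y in B, Iintegrand lam x y :=
        setIntegral_mono_set hint ((ae_restrict_iff' measurableSet_Icc).2
          (ae_of_all _ fun y hy => Iintegrand_nonneg hl hx hy)) hSB.eventuallyLE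
    _ = Iint n lam x := (Iint_eq lam x).symm

lemma integral_Icc_inv_one_add_mul_sq {a b c : ℝ} (hab : a ≤ b) (hc : 0 ≤ c) :
    ∫ s in Set.Icc a b, ((1 + c * (b - s)) ^ 2)⁻¹ = (b - a) / (1 + c * (b - a)) := by
  have hpos : ∀ s ∈ Set.uIcc a b, 0 < 1 + c * (b - s) := by
    intro s hs
    rw [Set.uIcc_of_le hab] at hs
    have := sub_nonneg.2 hs.2
    positivity
  rw [integral_Icc_eq_integral_Ioc, ← intervalIntegral.integral_of_le hab,
    intervalIntegral.integral_eq_sub_of_hasDerivAt (f := fun s => -((b - s) / (1 + c * (b - s))))]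
  · simp
  · intro s hs
    have hne := (hpos s hs).ne'
    have h1 : HasDerivAt (fun s : ℝ => b - s) (-1) s := by
      simpa using (hasDerivAt_id s).const_sub b
    have h2 : HasDerivAt (fun s : ℝ => 1 + c * (b - s)) (c * -1) s := (h1.const_mul c).const_add 1
    refine (h1.div h2 hne).neg.congr_deriv ?_
    field_simp
    ring
  · refine ContinuousOn.intervalIntegrable ?_
    exact ContinuousOn.inv₀ (by fun_prop) fun s hs => (pow_pos (hpos s hs) 2).ne'

lemma exp_neg_mul_pow_le (n : ℕ) {t : ℝ} (ht : 0 ≤ t) :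
    Real.exp (-t) * (1 + t) ^ n ≤ (n + 2).factorial * Real.exp 1 * ((1 + t) ^ 2)⁻¹ := by
  have h := Real.pow_div_factorial_le_exp (x := 1 + t) (by positivity) (n + 2)
  rw [div_le_iff₀ (by positivity), Real.exp_add] at h
  rw [← div_eq_mul_inv, le_div_iff₀ (by positivity), Real.exp_neg, inv_mul_eq_div,
    div_mul_eq_mul_div, div_le_iff₀ (Real.exp_pos t), ← pow_add]
  linarith

lemma Iint_le_effProd (hl : Antitone lam) (hx : Antitone x) :
    Iint n lam x ≤ ((n + 2).factorial * Real.exp 1) ^ n * effProd lam x := by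
  set B := Set.Icc (fun k : Fin n => x k.succ) (fun k : Fin n => x k.castSucc) with hB
  have hm := effGap_nonneg hl hx
  set μ : Fin n → ℝ := fun k => lam k.castSucc - lam (Fin.last n) with hμ
  have hμ0 : ∀ k, 0 ≤ μ k := fun k => sub_nonneg.2 (hl (Fin.le_last k.castSucc))
  set K : ℝ := (n + 2).factorial * Real.exp 1 with hK
  set Q := ∏ i : Fin n, ∏ j ∈ Ioi i, saturation
    ((x i.castSucc - x j.castSucc + effGap lam x j) * (lam i.castSucc - lam j.castSucc)) with hQ
  have hQ0 : 0 ≤ Q := prod_nonneg fun i _ => prod_nonneg fun j hj => saturation_nonneg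
    (mul_nonneg (add_nonneg (sub_castSucc_nonneg hx hj) (hm j)) (sub_castSucc_nonneg hl hj))
  set D : (Fin n → ℝ) → ℝ := fun y => ∏ k : Fin n, ((1 + μ k * (x k.castSucc - y k)) ^ 2)⁻¹
    with hD
  have hle : ∀ y ∈ B, Iintegrand lam x y ≤ K ^ n * Q * D y := by
    intro y hy
    have hs0 : ∀ k, 0 ≤ x k.castSucc - y k := fun k => sub_nonneg.2 (hy.2 k)
    have ht0 : ∀ k, 0 ≤ μ k * (x k.castSucc - y k) := fun k => mul_nonneg (hμ0 k) (hs0 k)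
    have hprod : ∏ i : Fin n, ∏ j ∈ Ioi i,
        saturation ((y i - y j) * (lam i.castSucc - lam j.castSucc)) ≤
          (∏ k : Fin n, (1 + μ k * (x k.castSucc - y k)) ^ n) * Q := by
      have hcoef : ∏ i : Fin n, ∏ j ∈ Ioi i, (1 + μ j * (x j.castSucc - y j)) ≤
          ∏ k : Fin n, (1 + μ k * (x k.castSucc - y k)) ^ n := by
        calc _ ≤ ∏ _i : Fin n, ∏ j : Fin n, (1 + μ j * (x j.castSucc - y j)) := by
              refine prod_le_prod (fun i _ => prod_nonneg fun j _ => ?_) fun i _ => ?_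
              · linarith [ht0 j]
              · refine prod_le_prod_of_subset_of_one_le (subset_univ _)
                  (fun j _ => ?_) fun j _ _ => ?_ <;> linarith [ht0 j]
          _ = _ := by simp [prod_pow]
      refine le_trans ?_ (mul_le_mul_of_nonneg_right hcoef hQ0)
      rw [hQ, ← prod_mul_distrib]
      simp only [← prod_mul_distrib]
      have hterm : ∀ i : Fin n, ∀ j ∈ Ioi i,
          0 ≤ saturation ((y i - y j) * (lam i.castSucc - lam j.castSucc)) := fun i j hj =>
        saturation_nonneg
          (mul_nonneg (sub_nonneg_of_mem_box hx hy hj) (sub_castSucc_nonneg hl hj))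
      refine prod_le_prod (fun i _ => prod_nonneg (hterm i)) fun i _ =>
        prod_le_prod (hterm i) fun j hj => ?_
      have hν := sub_castSucc_nonneg hl hj
      have hxij := sub_castSucc_nonneg hx hj
      refine saturation_le_mul (by linarith [ht0 j])
        (mul_nonneg (sub_nonneg_of_mem_box hx hy hj) hν)
        (mul_nonneg (add_nonneg hxij (hm j)) hν) ?_
      rw [← mul_assoc]
      refine mul_le_mul_of_nonneg_right ?_ hν
      have hd := sub_nonneg.2 (hx j.castSucc_lt_succ.le)
      have hsd : x j.castSucc - y j ≤ x j.castSucc - x j.succ := by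
        have := hy.1 j
        dsimp only at this
        linarith
      have hsm : x j.castSucc - y j ≤ (1 + μ j * (x j.castSucc - y j)) * effGap lam x j := by
        have h0 := hμ0 j
        rw [effGap, ← mul_div_assoc, le_div_iff₀ (by positivity)]
        linarith
      have := mul_nonneg (ht0 j) hxij
      linarith [hs0 i]
    calc Iintegrand lam x y
        ≤ Real.exp (-∑ k : Fin n, μ k * (x k.castSucc - y k)) *
          ((∏ k : Fin n, (1 + μ k * (x k.castSucc - y k)) ^ n) * Q) :=
          mul_le_mul_of_nonneg_left hprod (Real.exp_nonneg _)
      _ = (∏ k : Fin n, (Real.exp (-(μ k * (x k.castSucc - y k))) *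
            (1 + μ k * (x k.castSucc - y k)) ^ n)) * Q := by
          rw [← sum_neg_distrib, Real.exp_sum, prod_mul_distrib, mul_assoc]
      _ ≤ (∏ k : Fin n, (K * ((1 + μ k * (x k.castSucc - y k)) ^ 2)⁻¹)) * Q := by
          refine mul_le_mul_of_nonneg_right (prod_le_prod (fun k _ => ?_) fun k _ =>
            exp_neg_mul_pow_le n (ht0 k)) hQ0
          have := ht0 k
          positivity
      _ = K ^ n * Q * D y := by
          rw [prod_mul_distrib, prod_const, card_univ, Fintype.card_fin]
          ring
  have hDint : IntegrableOn D B := by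
    refine ContinuousOn.integrableOn_compact isCompact_Icc ?_
    refine continuousOn_finsetProd _ fun k _ => ContinuousOn.inv₀ (by fun_prop) fun y hy => ?_
    have h0 := hμ0 k
    have h1 : 0 ≤ x k.castSucc - y k := sub_nonneg.2 (hy.2 k)
    positivity
  have hDval : ∫ y in B, D y = ∏ k, effGap lam x k := by
    rw [hB, ← Set.pi_univ_Icc, volume_pi, Measure.restrict_pi_pi, hD,
      integral_fintype_prod_eq_prod (fun k s => ((1 + μ k * (x k.castSucc - s)) ^ 2)⁻¹)]
    exact prod_congr rfl fun k _ =>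
      integral_Icc_inv_one_add_mul_sq (hx k.castSucc_lt_succ.le) (hμ0 k)
  calc Iint n lam x = ∫ y in B, Iintegrand lam x y := Iint_eq lam x
    _ ≤ ∫ y in B, K ^ n * Q * D y :=
        setIntegral_mono_on (integrableOn_Iintegrand hl hx) (hDint.const_mul _)
          measurableSet_Icc hle
    _ = K ^ n * effProd lam x := by
        rw [integral_const_mul, hDval, effProd, prod_mul_distrib]
        ring

end Antitone

/-- Sharp estimate of `I⁽ⁿ⁾`: for weakly decreasing `λ, x ∈ ℝ^{n+1}`,
`I⁽ⁿ⁾(λ;x) ≍ [∏_{i<j≤n+1}(x_i−x_j) · ∏_{i<j≤n}(λ_i−λ_j)] / ∏_{i<j≤n+1}(1+(λ_i−λ_j)(x_i−x_j))`,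
with constants depending only on `n`. -/
theorem Iint_estimate (n : ℕ) (hn : 1 ≤ n) :
    ∃ C₁ C₂ : ℝ, 0 < C₁ ∧ 0 < C₂ ∧
      ∀ lam x : Fin (n + 1) → ℝ, Antitone lam → Antitone x →
        C₁ * ((∏ i : Fin (n + 1), ∏ j ∈ Finset.Ioi i, (x i - x j)) *
              (∏ i : Fin n, ∏ j ∈ Finset.Ioi i, (lam i.castSucc - lam j.castSucc)) /
              ∏ i : Fin (n + 1), ∏ j ∈ Finset.Ioi i, (1 + (lam i - lam j) * (x i - x j))) ≤
            Iint n lam x ∧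
        Iint n lam x ≤
          C₂ * ((∏ i : Fin (n + 1), ∏ j ∈ Finset.Ioi i, (x i - x j)) *
              (∏ i : Fin n, ∏ j ∈ Finset.Ioi i, (lam i.castSucc - lam j.castSucc)) /
              ∏ i : Fin (n + 1), ∏ j ∈ Finset.Ioi i, (1 + (lam i - lam j) * (x i - x j))) := by
  refine ⟨Real.exp (-n) * ((1 / 4) ^ n) ^ n * (1 / 4) ^ n / (2 ^ n) ^ n,
    ((n + 2).factorial * Real.exp 1) ^ n * (2 ^ n) ^ n, by positivity, by positivity,
    fun lam x hl hx => ?_⟩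
  rw [closed_form_eq]
  constructor
  · refine le_trans ?_ (effProd_le_Iint hl hx)
    rw [div_mul_eq_mul_div, mul_div_assoc]
    refine mul_le_mul_of_nonneg_left ?_ (by positivity)
    rw [div_le_iff₀' (by positivity)]
    exact closed_form_le_effProd hl hx
  · refine (Iint_le_effProd hl hx).trans ?_
    rw [mul_assoc]
    exact mul_le_mul_of_nonneg_left (effProd_le_closed_form hl hx) (by positivity)
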